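/- Let (V, E) be a finite DAG with execution times X : V → ℕ and ASAP start-time function S_X, and let Δ : ℕ be a carry-out window length. Then for every start assignment σ : V → ℕ that is feasible for X (σ v ≥ σ u + X u for every edge (u, v)), the carry-out workload of σ is at most that of the ASAP schedule: Σ_{v ∈ V} min(X v, Δ ∸ σ v) ≤ Σ_{v ∈ V} min(X v, Δ ∸ S_X v). In other words, for fixed execution times, the workload generated in the window [0, Δ) by the schedule in which every subtask starts as soon as all of its predecessors finish is an upper bound on the carry-out workload of any precedence-respecting schedule with those execution times. -/

import Mathlib

open scoped Classical

theorem wellFounded_of_forall_not_transGen_self {V : Type*} [Finite V] {E : V → V → Prop}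
    (hE : ∀ v, ¬ Relation.TransGen E v v) : WellFounded E :=
  have : Std.Irrefl (Relation.TransGen E) := ⟨hE⟩
  Subrelation.wf Relation.TransGen.single
    (Finite.wellFounded_of_trans_of_irrefl (Relation.TransGen E))

section Schedule

variable {V T : Type*}

/-- The start times `σ` respect the precedence relation `E` when vertex `v` runs for time `X v`:
no vertex starts before all its predecessors have finished. -/
def IsFeasibleStart [LE T] [Add T] (E : V → V → Prop) (X σ : V → T) : Prop :=
  ∀ ⦃u v⦄, E u v → σ u + X u ≤ σ v

/-- `S` is an as-soon-as-possible (ASAP) start-time function for the precedence relation `E` and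
the execution times `X`. The recursion is stated with `IsLUB` so that a vertex may have infinitely
many predecessors; a source starts at the least element of `T`, being a least upper bound of `∅`. -/
def IsAsapStart [Preorder T] [Add T] (E : V → V → Prop) (X S : V → T) : Prop :=
  ∀ v, IsLUB ((fun u => S u + X u) '' {u | E u v}) (S v)

/-- The carry-out workload of the vertices in `s` in a window of length `Δ`, with execution times
`X` and start times `σ`. Subtraction is meant to be truncated, as in `ℕ` or `ℝ≥0`, so that a vertex
starting after the window contributes nothing. -/
def carryOutWorkload [AddCommMonoid T] [LinearOrder T] [Sub T]
    (s : Finset V) (X : V → T) (Δ : T) (σ : V → T) : T :=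
  ∑ v ∈ s, min (X v) (Δ - σ v)

theorem isAsapStart_of_eq_sup [Fintype V] [SemilatticeSup T] [OrderBot T] [Add T]
    {E : V → V → Prop} [DecidableRel E] {X S : V → T}
    (hS : ∀ v, S v = (Finset.univ.filter (E · v)).sup fun u => S u + X u) :
    IsAsapStart E X S := fun v => by
  rw [hS v]
  simpa only [Finset.coe_filter_univ] using
    Finset.isLUB_sup (s := Finset.univ.filter (E · v)) (f := fun u => S u + X u)

theorem IsAsapStart.isLeast_isFeasibleStart [Preorder T] [Add T] [AddRightMono T]
    {E : V → V → Prop} {X S : V → T} (hE : WellFounded E) (hS : IsAsapStart E X S) :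
    IsLeast {σ | IsFeasibleStart E X σ} S := by
  refine ⟨fun u v huv => (hS v).1 ⟨u, huv, rfl⟩, fun σ hσ v => ?_⟩
  induction v using hE.induction with
  | _ v ih =>
    refine (hS v).2 ?_
    rintro _ ⟨u, huv, rfl⟩
    calc
      S u + X u ≤ σ u + X u := add_le_add_left (ih u huv) (X u)
      _ ≤ σ v := hσ huv

variable [AddCommMonoid T] [LinearOrder T] [IsOrderedAddMonoid T] [Sub T] [OrderedSub T]

theorem antitone_carryOutWorkload (s : Finset V) (X : V → T) (Δ : T) :
    Antitone (carryOutWorkload s X Δ) := fun _ _ h =>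
  Finset.sum_le_sum fun v _ => min_le_min_left (X v) (tsub_le_tsub_left (h v) Δ)

theorem carryout_workload_le_asap_general {E : V → V → Prop} (hE : WellFounded E) {X S σ : V → T}
    (hS : IsAsapStart E X S) (hσ : IsFeasibleStart E X σ) (s : Finset V) (Δ : T) :
    carryOutWorkload s X Δ σ ≤ carryOutWorkload s X Δ S :=
  antitone_carryOutWorkload s X Δ ((hS.isLeast_isFeasibleStart hE).2 hσ)

end Schedule

/-- Let `S` be the ASAP start-time function of a finite DAG `(V, E)`
with execution times `X`, and `Δ` a carry-out window length.  For every start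
assignment `σ` feasible for `X` (i.e. `σ v ≥ σ u + X u` for every edge `(u, v)`),
the carry-out workload of `σ` is at most that of the ASAP schedule:
`Σ_v min (X v) (Δ - σ v) ≤ Σ_v min (X v) (Δ - S v)` (truncated subtraction). -/
theorem carryout_workload_le_asap {V : Type*} [Fintype V] (E : V → V → Prop)
    (hE : ∀ v : V, ¬ Relation.TransGen E v v) (X S : V → ℕ)
    (hS : ∀ v : V,
      S v = (Finset.univ.filter (fun u => E u v)).sup (fun u => S u + X u))
    (Δ : ℕ) (σ : V → ℕ) (hσ : ∀ u v : V, E u v → σ u + X u ≤ σ v) :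
    ∑ v : V, min (X v) (Δ - σ v) ≤ ∑ v : V, min (X v) (Δ - S v) :=
  carryout_workload_le_asap_general (wellFounded_of_forall_not_transGen_self hE)
    (isAsapStart_of_eq_sup hS) hσ Finset.univ Δ
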